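/- Let B be a commutative Noetherian ring, A = B[y], r ≥ 3, and let b = b(y) = (b_1,…,b_{−1})^t ∈ IUm_{2r}(A). Let s ∈ B ∩ ⟨b_1,…,b_{r−1}⟩. Then there exists m ∈ ℕ such that, in the ring A[z] = B[y,z], the column b(y + s^m z) obtained from b by the substitution y ↦ y + s^m z satisfies b(y + s^m z) ∈ EO(2r, A[z])^{≤ r(r−1)/2 + 8r−4} · b(y). -/

import Mathlib

open Matrix

section EvenDefs

variable {R : Type*} [CommRing R]

/-- In the basis `e_1,…,e_r,e_{-r},…,e_{-1}` of `R^{2r}` (0-indexed by `Fin (2*r)`),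
the position of `e_{-i}` given the position of `e_i` (and vice versa). -/
def negE (r : ℕ) (i : Fin (2 * r)) : Fin (2 * r) := ⟨2 * r - 1 - i.val, by omega⟩

/-- The split quadratic form `q(x) = ∑_{i=1}^r x_i x_{-i}` on `R^{2r}`. -/
def quadE (r : ℕ) (x : Fin (2 * r) → R) : R :=
  ∑ i : Fin r, x ⟨i.val, by omega⟩ * x ⟨2 * r - 1 - i.val, by omega⟩

/-- The even split orthogonal group `O(2r,R)`, as a set of matrices. -/
def OE (r : ℕ) (R : Type*) [CommRing R] : Set (Matrix (Fin (2 * r)) (Fin (2 * r)) R) :=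
  {g | IsUnit g ∧ ∀ x : Fin (2 * r) → R, quadE r (g.mulVec x) = quadE r x}

/-- The elementary orthogonal transvection `T_{i,j}(ξ) = e + ξ e_{i,j} - ξ e_{-j,-i}`. -/
def TE (r : ℕ) (i j : Fin (2 * r)) (ξ : R) : Matrix (Fin (2 * r)) (Fin (2 * r)) R :=
  1 + ξ • Matrix.single i j 1 - ξ • Matrix.single (negE r j) (negE r i) 1

/-- Being an elementary orthogonal transvection (even case): `T_{i,j}(ξ)` with `i ≠ ±j`. -/
def IsElemE (r : ℕ) (g : Matrix (Fin (2 * r)) (Fin (2 * r)) R) : Prop :=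
  ∃ i j : Fin (2 * r), ∃ ξ : R, i ≠ j ∧ i ≠ negE r j ∧ g = TE r i j ξ

/-- `EO(2r,R)^{≤N}` : products of at most `N` elementary orthogonal transvections. -/
def EOE (r N : ℕ) (R : Type*) [CommRing R] : Set (Matrix (Fin (2 * r)) (Fin (2 * r)) R) :=
  {g | ∃ L : List (Matrix (Fin (2 * r)) (Fin (2 * r)) R),
    L.length ≤ N ∧ (∀ m ∈ L, IsElemE r m) ∧ g = L.prod}

/-- `IUm_{2r}(R)` : isotropic unimodular columns. -/
def IUmE (r : ℕ) (R : Type*) [CommRing R] : Set (Fin (2 * r) → R) :=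
  {b | Ideal.span (Set.range b) = ⊤ ∧ quadE r b = 0}

end EvenDefs


section Helpers

variable {R : Type*} [CommRing R]

/-- Linear elementary moves on columns, with all parameters divisible by `t`. -/
inductive Mv {ι : Type*} [DecidableEq ι] (t : R) : ℕ → (ι → R) → (ι → R) → Prop
  | refl (p : ι → R) : Mv t 0 p p
  | step (n : ℕ) (p q : ι → R) (i j : ι) (ξ : R) (hij : i ≠ j) (h : Mv t n p q) :
      Mv t (n + 1) p (q + Pi.single i (t * ξ * q j))

theorem Mv.trans {ι : Type*} [DecidableEq ι] {t : R} {m n : ℕ} {p q w : ι → R}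
    (h1 : Mv t m p q) (h2 : Mv t n q w) : Mv t (m + n) p w := by
  induction h2 with
  | refl q => exact h1
  | step n q w i j ξ hij h ih => exact Mv.step _ _ _ i j ξ hij (ih h1)

theorem Mv.row {ι : Type*} [DecidableEq ι] (t : R) (i : ι) (S : Finset ι) (hi : i ∉ S)
    (η : ι → R) (p : ι → R) :
    Mv t S.card p (p + Pi.single i (t * ∑ j ∈ S, η j * p j)) := by
  induction S using Finset.induction_on with
  | empty => simpa using Mv.refl (t := t) p
  | insert a S ha ih =>
    have hia : i ≠ a := by rintro rfl; simp at hi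
    have hiS : i ∉ S := fun h => hi (Finset.mem_insert_of_mem h)
    have := Mv.step _ _ _ i a (η a) hia (ih hiS)
    rw [Finset.card_insert_of_notMem ha]
    convert this using 1
    rw [Finset.sum_insert ha, add_assoc, ← Pi.single_add]
    congr 2
    simp [Pi.single_eq_of_ne hia.symm]
    ring

theorem Mv.col {ι : Type*} [DecidableEq ι] (t : R) (j : ι) (S : Finset ι) (hj : j ∉ S)
    (x : ι → R) (p : ι → R) :
    Mv t S.card p (p + fun i => if i ∈ S then t * x i * p j else 0) := by
  induction S using Finset.induction_on with
  | empty =>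
    simp only [Finset.notMem_empty, if_false, Finset.card_empty]
    convert Mv.refl (t := t) p using 1
    ext; simp
  | insert a S ha ih =>
    have hja : a ≠ j := by rintro rfl; simp at hj
    have hjS : j ∉ S := fun h => hj (Finset.mem_insert_of_mem h)
    have := Mv.step _ _ _ a j (x a) hja (ih hjS)
    rw [Finset.card_insert_of_notMem ha]
    convert this using 1
    ext k
    by_cases hk : k = a
    · subst hk; simp [ha, hjS]
    · simp [hk]

theorem Mv.col' {ι : Type*} [DecidableEq ι] (t : R) (j : ι) (S : Finset ι) (hj : j ∉ S)
    (x : ι → R) (hx : ∀ i, i ∉ S → x i = 0) (c : R) (p : ι → R) :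
    Mv t S.card p (p + (t * c * p j) • x) := by
  convert Mv.col t j S hj (fun i => c * x i) p using 2
  ext k
  by_cases hk : k ∈ S
  · simp [hk]; ring
  · simp [hk, hx k hk]

theorem Mv.transv {ι : Type*} [DecidableEq ι] [Fintype ι] (t : R) (h : ι) (S : Finset ι)
    (hS : h ∉ S) (x y : ι → R) (hx : ∀ i, i ∉ S → x i = 0) (hyx : ∑ i, y i * x i = 0)
    (p : ι → R) :
    Mv t (2 * S.card + 2 * (Fintype.card ι - 1)) p
      (p + (t ^ 2 * ∑ i, y i * p i) • x) := by
  have hxh : x h = 0 := hx h hS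
  have hhE : h ∉ Finset.univ.erase h := by simp
  have hcard : (Finset.univ.erase h).card = Fintype.card ι - 1 := by
    rw [Finset.card_erase_of_mem (Finset.mem_univ _), Finset.card_univ]
  have hsplit : ∀ q : ι → R, ∑ i, y i * q i = ∑ i ∈ Finset.univ.erase h, y i * q i + y h * q h :=
    fun q => (Finset.sum_erase_add _ _ (Finset.mem_univ h)).symm
  have hyx' : ∑ i ∈ Finset.univ.erase h, y i * x i = 0 := by
    have := hsplit x
    rw [hyx, hxh] at this
    simpa using this.symm
  set Y := ∑ i ∈ Finset.univ.erase h, y i * p i with hY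
  have h1 := Mv.row t h (Finset.univ.erase h) hhE y p
  rw [← hY] at h1
  have h2 := Mv.col' t h S hS x hx 1 (p + Pi.single h (t * Y))
  have h3 := Mv.row t h (Finset.univ.erase h) hhE (fun i => - y i)
    (p + Pi.single h (t * Y) + (t * 1 * (p + Pi.single h (t * Y) : ι → R) h) • x)
  have e3 : ∑ j ∈ Finset.univ.erase h, (fun i => - y i) j *
      (p + Pi.single h (t * Y) + (t * 1 * (p + Pi.single h (t * Y) : ι → R) h) • x : ι → R) j = - Y := by
    have : ∀ j ∈ Finset.univ.erase h, (fun i => - y i) j *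
      (p + Pi.single h (t * Y) + (t * 1 * (p + Pi.single h (t * Y) : ι → R) h) • x : ι → R) j
       = - (y j * p j) - (t * (p h + t * Y)) * (y j * x j) := by
      intro j hj
      have hj' : j ≠ h := Finset.ne_of_mem_erase hj
      simp [hj']; ring
    rw [Finset.sum_congr rfl this, Finset.sum_sub_distrib, ← Finset.mul_sum, hyx',
      Finset.sum_neg_distrib, hY]
    ring
  rw [e3] at h3
  have e4 : p + Pi.single h (t * Y) + (t * 1 * (p + Pi.single h (t * Y) : ι → R) h) • x
      + Pi.single h (t * -Y) = p + (t * (p h + t * Y)) • x := by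
    ext k
    by_cases hk : k = h
    · subst hk; simp; ring
    · simp [hk]
  rw [e4] at h3
  have h4 := Mv.col' t h S hS x hx (-1 + t * y h) (p + (t * (p h + t * Y)) • x)
  have e5 : p + (t * (p h + t * Y)) • x +
      (t * (-1 + t * y h) * (p + (t * (p h + t * Y)) • x) h) • x
      = p + (t ^ 2 * ∑ i, y i * p i) • x := by
    rw [hsplit p, ← hY]
    ext k
    simp [hxh]
    ring
  rw [e5] at h4
  have := ((h1.trans h2).trans h3).trans h4
  rw [hcard] at this
  convert this using 1
  ring

/-- positive index -/
def ixP (r : ℕ) (i : Fin r) : Fin (2 * r) := ⟨i.val, by omega⟩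
/-- negative index -/
def ixN (r : ℕ) (i : Fin r) : Fin (2 * r) := ⟨2 * r - 1 - i.val, by omega⟩

theorem negE_ixP (r : ℕ) (i : Fin r) : negE r (ixP r i) = ixN r i := rfl
theorem negE_ixN (r : ℕ) (i : Fin r) : negE r (ixN r i) = ixP r i := by
  simp only [negE, ixN, ixP, Fin.mk.injEq]; omega
theorem ixP_inj (r : ℕ) (i j : Fin r) : ixP r i = ixP r j ↔ i = j := by
  simp [ixP, Fin.ext_iff]
theorem ixN_inj (r : ℕ) (i j : Fin r) : ixN r i = ixN r j ↔ i = j := by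
  simp only [ixN, Fin.ext_iff]; omega
theorem ixP_ne_ixN (r : ℕ) (i j : Fin r) : ixP r i ≠ ixN r j := by
  simp only [ixN, ixP, ne_eq, Fin.ext_iff]; omega
theorem ix_cases (r : ℕ) (k : Fin (2 * r)) : (∃ i, k = ixP r i) ∨ ∃ i, k = ixN r i := by
  by_cases h : k.val < r
  · exact Or.inl ⟨⟨k.val, h⟩, rfl⟩
  · refine Or.inr ⟨⟨2 * r - 1 - k.val, by omega⟩, ?_⟩
    simp only [ixN, Fin.ext_iff]; omega

theorem quadE_eq (r : ℕ) (x : Fin (2 * r) → R) :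
    quadE r x = ∑ i : Fin r, x (ixP r i) * x (ixN r i) := rfl

theorem TE_mulVec (r : ℕ) (i j : Fin (2 * r)) (ξ : R) (v : Fin (2 * r) → R) :
    (TE r i j ξ).mulVec v
      = v + Pi.single i (ξ * v j) - Pi.single (negE r j) (ξ * v (negE r i)) := by
  unfold TE
  rw [Matrix.sub_mulVec, Matrix.add_mulVec, Matrix.one_mulVec, Matrix.smul_mulVec,
    Matrix.smul_mulVec]
  congr 1
  · congr 1
    ext k
    simp [Matrix.single_mulVec, Function.update_apply, Pi.single_apply]
  · ext k
    simp [Matrix.single_mulVec, Function.update_apply, Pi.single_apply]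

theorem lift_moves (r : ℕ) (t : R) (n : ℕ) (p q : Fin r → R) (h : Mv t n p q)
    (v : Fin (2 * r) → R) (hv : ∀ i, v (ixP r i) = p i) :
    ∃ L : List (Matrix (Fin (2 * r)) (Fin (2 * r)) R), L.length = n ∧ (∀ m ∈ L, IsElemE r m) ∧
      (∀ i, (L.prod.mulVec v) (ixP r i) = q i) ∧
      quadE r (L.prod.mulVec v) = quadE r v ∧
      ∀ i, t ∣ (L.prod.mulVec v) (ixN r i) - v (ixN r i) := by
  induction h with
  | refl p => exact ⟨[], rfl, by simp, by simpa using hv, by simp, by simp⟩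
  | step n p q i j ξ hij h ih =>
    obtain ⟨L, hl, hL, hP, hQ, hN⟩ := ih hv
    set w := L.prod.mulVec v with hw
    have key : (TE r (ixP r i) (ixP r j) (t * ξ) :: L).prod.mulVec v =
      w + Pi.single (ixP r i) (t * ξ * w (ixP r j))
        - Pi.single (ixN r j) (t * ξ * w (ixN r i)) := by
      rw [List.prod_cons, ← Matrix.mulVec_mulVec, TE_mulVec, ← hw, negE_ixP, negE_ixP]
    have kP : ∀ k, (w + Pi.single (ixP r i) (t * ξ * w (ixP r j))
        - Pi.single (ixN r j) (t * ξ * w (ixN r i)) : Fin (2 * r) → R) (ixP r k)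
        = (q + Pi.single i (t * ξ * q j) : Fin r → R) k := by
      intro k
      simp [Pi.single_apply, ixP_inj, ixP_ne_ixN, hP]
    have kN : ∀ k, (w + Pi.single (ixP r i) (t * ξ * w (ixP r j))
        - Pi.single (ixN r j) (t * ξ * w (ixN r i)) : Fin (2 * r) → R) (ixN r k)
        = w (ixN r k) - (Pi.single j (t * ξ * w (ixN r i)) : Fin r → R) k := by
      intro k
      simp [Pi.single_apply, ixN_inj, (ixP_ne_ixN r _ _).symm]
    refine ⟨TE r (ixP r i) (ixP r j) (t * ξ) :: L, by simp [hl], ?_, ?_, ?_, ?_⟩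
    · intro m hm
      rcases List.mem_cons.1 hm with rfl | hm
      · exact ⟨_, _, _, by simpa [ixP_inj] using hij, by rw [negE_ixP]; exact ixP_ne_ixN r i j, rfl⟩
      · exact hL m hm
    · intro k; rw [key, kP]
    · rw [key, ← hQ, quadE_eq, quadE_eq]
      have : ∀ k, (q + Pi.single i (t * ξ * q j) : Fin r → R) k *
          (w (ixN r k) - (Pi.single j (t * ξ * w (ixN r i)) : Fin r → R) k)
          = q k * w (ixN r k) + (if k = i then t * ξ * q j * w (ixN r k) else 0)
            - (if k = j then q k * (t * ξ * w (ixN r i)) else 0) := by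
        intro k
        by_cases h1 : k = i
        · subst h1
          simp [hij]; ring
        · by_cases h2 : k = j
          · subst h2; simp [h1]; ring
          · simp [h1, h2]
      rw [Finset.sum_congr rfl (fun k _ => by rw [kP k, kN k, this k])]
      simp only [hP, Finset.sum_sub_distrib, Finset.sum_add_distrib, Finset.sum_ite_eq',
        Finset.mem_univ, if_true]
      ring
    · intro k
      rw [key, kN]
      have h1 : t ∣ (Pi.single j (t * ξ * w (ixN r i)) : Fin r → R) k := by
        by_cases hk : k = j
        · subst hk; simp [mul_assoc]
        · simp [hk]
      have := dvd_sub (hN k) h1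
      convert this using 1
      ring

theorem alt_moves (r : ℕ) (S : Finset (Fin r × Fin r)) (hS : ∀ x ∈ S, x.1 ≠ x.2)
    (α : Fin r → Fin r → R) (v : Fin (2 * r) → R) :
    ∃ L : List (Matrix (Fin (2 * r)) (Fin (2 * r)) R), L.length = S.card ∧
      (∀ m ∈ L, IsElemE r m) ∧
      (∀ i, (L.prod.mulVec v) (ixP r i) = v (ixP r i)) ∧
      ∀ k, (L.prod.mulVec v) (ixN r k) = v (ixN r k) +
        ∑ x ∈ S, ((if k = x.1 then α x.1 x.2 * v (ixP r x.2) else 0)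
          - (if k = x.2 then α x.1 x.2 * v (ixP r x.1) else 0)) := by
  induction S using Finset.induction_on with
  | empty => exact ⟨[], by simp, by simp, by simp, by simp⟩
  | insert a S ha ih =>
    obtain ⟨L, hl, hL, hP, hN⟩ := ih (fun x hx => hS x (Finset.mem_insert_of_mem hx))
    have ha' := hS a (Finset.mem_insert_self _ _)
    obtain ⟨i, j⟩ := a
    simp only at ha'
    set w := L.prod.mulVec v with hw
    have key : (TE r (ixN r i) (ixP r j) (α i j) :: L).prod.mulVec v =
      w + Pi.single (ixN r i) (α i j * w (ixP r j))
        - Pi.single (ixN r j) (α i j * w (ixP r i)) := by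
      rw [List.prod_cons, ← Matrix.mulVec_mulVec, TE_mulVec, ← hw, negE_ixP, negE_ixN]
    refine ⟨TE r (ixN r i) (ixP r j) (α i j) :: L, ?_, ?_, ?_, ?_⟩
    · rw [Finset.card_insert_of_notMem ha]; simp [hl]
    · intro m hm
      rcases List.mem_cons.1 hm with rfl | hm
      · exact ⟨_, _, _, (ixP_ne_ixN r j i).symm, by
          rw [negE_ixP]; simpa [ixN_inj] using ha', rfl⟩
      · exact hL m hm
    · intro k; rw [key]
      simp [Pi.single_apply, ixP_ne_ixN, hP]
    · intro k
      rw [key, Finset.sum_insert ha]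
      simp only [Pi.sub_apply, Pi.add_apply, Pi.single_apply, ixN_inj, hP, hN]
      ring

theorem card_pairs (r : ℕ) :
    ((Finset.univ : Finset (Fin r × Fin r)).filter (fun x => x.1 < x.2)).card = r * (r - 1) / 2 := by
  have h : ((Finset.univ : Finset (Fin r × Fin r)).filter (fun x => x.1 < x.2)).card
      = ∑ j : Fin r, (j : ℕ) := by
    rw [Finset.card_filter, Fintype.sum_prod_type_right]
    refine Finset.sum_congr rfl fun j _ => ?_
    rw [← Finset.card_filter]
    have : (Finset.univ.filter fun i : Fin r => i < j) = Finset.Iio j := by ext; simp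
    simp [this]
  rw [h, Fin.sum_univ_eq_sum_range (fun i => i) r, Finset.sum_range_id]

theorem alt_sum (r : ℕ) (α : Fin r → Fin r → R) (hα : ∀ i j, α j i = - α i j)
    (hα0 : ∀ i, α i i = 0) (c : Fin r → R) (k : Fin r) :
    ∑ x ∈ (Finset.univ : Finset (Fin r × Fin r)).filter (fun x => x.1 < x.2),
      ((if k = x.1 then α x.1 x.2 * c x.2 else 0) - (if k = x.2 then α x.1 x.2 * c x.1 else 0))
     = ∑ j, α k j * c j := by
  rw [Finset.sum_filter]
  have : ∀ x : Fin r × Fin r, (if x.1 < x.2 then ((if k = x.1 then α x.1 x.2 * c x.2 else 0) -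
      (if k = x.2 then α x.1 x.2 * c x.1 else 0)) else 0)
      = (if k = x.1 then (if k < x.2 then α k x.2 * c x.2 else 0) else 0)
       + (if k = x.2 then (if x.1 < k then α k x.1 * c x.1 else 0) else 0) := by
    rintro ⟨i, j⟩
    dsimp only
    by_cases h1 : k = i
    · subst h1
      by_cases h2 : k = j
      · subst h2; simp
      · simp [h2]
    · by_cases h2 : k = j
      · subst h2
        simp [h1, hα k i]
      · simp [h1, h2]
  simp only [this, Finset.sum_add_distrib]
  rw [Fintype.sum_prod_type_right, Fintype.sum_prod_type]
  simp only [Finset.sum_ite_eq, Finset.mem_univ, if_true]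
  rw [← Finset.sum_add_distrib]
  refine Finset.sum_congr rfl fun j _ => ?_
  rcases lt_trichotomy k j with h | h | h
  · simp [h, h.not_gt]
  · subst h; simp [hα0]
  · simp [h, h.not_gt]

theorem core_shift (r : ℕ) (hr : 3 ≤ r) (s : R) (K : ℕ)
    (hK : ∀ f : R, s ^ (K + 1) * f = 0 → s ^ K * f = 0)
    (u v d : Fin (2 * r) → R) (hu : quadE r u = 0) (hv : quadE r v = 0)
    (hd : ∀ i, v i = u i + s ^ (2 * (K + 1) + 2) * d i)
    (a a' : Fin r → R) (ha : a ⟨r - 1, by omega⟩ = 0) (ha' : a' ⟨r - 1, by omega⟩ = 0)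
    (hs : s = ∑ i, a i * u (ixP r i)) (hs' : s = ∑ i, a' i * v (ixP r i)) :
    ∃ E ∈ EOE r (r * (r - 1) / 2 + 8 * r - 4) R, E.mulVec u = v := by
  set l : Fin r := ⟨r - 1, by omega⟩ with hl
  set g : Fin r := ⟨0, by omega⟩ with hg
  set g' : Fin r := ⟨1, by omega⟩ with hg'
  have hgl : g ≠ l := by simp [hg, hl, Fin.ext_iff]; omega
  have hgl' : g' ≠ l := by simp [hg', hl, Fin.ext_iff]; omega
  have hgg : g ≠ g' := by simp [hg', hg, Fin.ext_iff]
  set t := s ^ (K + 1) with ht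
  set p : Fin r → R := fun i => u (ixP r i) with hp
  set β := p l with hβ
  set e : Fin r → R := fun i => d (ixP r i) with he
  set y : Fin r → R := fun i => if i = l then s else a i * (1 - β) with hy
  set x1 : Fin r → R := Pi.single g (s * e g) + Pi.single l (-((1 - β) * (a g * e g))) with hx1
  set x2 : Fin r → R := fun i => if i = l then - ((1 - β) * ∑ j ∈ Finset.univ.erase g, a j * e j)
    else if i = g then 0 else s * e i with hx2
  have hsum : ∀ f h : Fin r → R, (∀ i, i ≠ l → f i = h i) → f l = 0 →
      ∑ i, f i = ∑ i ∈ Finset.univ.erase l, h i := by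
    intro f h h1 h2
    rw [← Finset.sum_erase_add _ _ (Finset.mem_univ l), h2, add_zero]
    exact Finset.sum_congr rfl fun i hi => h1 i (Finset.ne_of_mem_erase hi)
  have hyp : ∑ i, y i * p i = s := by
    rw [← Finset.sum_erase_add _ _ (Finset.mem_univ l)]
    have h1 : ∑ i ∈ Finset.univ.erase l, y i * p i
        = (1 - β) * ∑ i ∈ Finset.univ.erase l, a i * p i := by
      rw [Finset.mul_sum]
      refine Finset.sum_congr rfl fun i hi => ?_
      simp only [hy, Finset.ne_of_mem_erase hi, if_false]
      ring
    have h2 : ∑ i ∈ Finset.univ.erase l, a i * p i = s := by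
      rw [hs]
      exact (hsum _ _ (fun i _ => rfl) (by simp [ha])).symm
    rw [h1, h2]
    simp only [hy, if_true, ← hβ]
    ring
  have hyx1 : ∑ i, y i * x1 i = 0 := by
    simp only [hx1, Pi.add_apply, mul_add, Finset.sum_add_distrib, Pi.single_apply, mul_ite,
      mul_zero, Finset.sum_ite_eq', Finset.mem_univ, if_true]
    simp only [hy, hgl, if_true, if_false]
    ring
  have hyx2 : ∑ i, y i * x2 i = 0 := by
    rw [← Finset.sum_erase_add _ _ (Finset.mem_univ l)]
    have h1 : ∑ i ∈ Finset.univ.erase l, y i * x2 i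
        = s * (1 - β) * ∑ i ∈ Finset.univ.erase l, (if i = g then 0 else a i * e i) := by
      rw [Finset.mul_sum]
      refine Finset.sum_congr rfl fun i hi => ?_
      simp only [hy, hx2, Finset.ne_of_mem_erase hi, if_false]
      split_ifs <;> ring
    have h2 : ∑ i ∈ Finset.univ.erase l, (if i = g then 0 else a i * e i)
        = ∑ j ∈ Finset.univ.erase g, a j * e j := by
      have e1 : ∑ i ∈ Finset.univ.erase l, (if i = g then 0 else a i * e i)
        = ∑ i, (if i = g then 0 else a i * e i) :=
        (hsum _ _ (fun i _ => rfl) (by simp [ha])).symm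
      rw [e1, ← Finset.sum_erase_add _ _ (Finset.mem_univ g)]
      simp only [if_true, add_zero]
      refine Finset.sum_congr rfl fun i hi => ?_
      simp [Finset.ne_of_mem_erase hi]
    rw [h1, h2]
    simp only [hy, hx2, if_true]
    ring
  have m1 := Mv.transv t g' {g, l} (by simp [hgg.symm, hgl']) x1 y (by
    intro i hi
    simp only [Finset.mem_insert, Finset.mem_singleton, not_or] at hi
    simp [hx1, hi.1, hi.2]) hyx1 p
  rw [hyp] at m1
  have m2 := Mv.transv t g (Finset.univ.erase g) (by simp) x2 y (by
    intro i hi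
    have : i = g := by simpa using hi
    simp [hx2, this, hgl]) hyx2 (p + (t ^ 2 * s) • x1)
  have hyp' : ∑ i, y i * (p + (t ^ 2 * s) • x1) i = s := by
    have : ∀ i, y i * (p + (t ^ 2 * s) • x1) i = y i * p i + (t ^ 2 * s) * (y i * x1 i) := by
      intro i; simp; ring
    simp only [this, Finset.sum_add_distrib, ← Finset.mul_sum, hyp, hyx1]
    ring
  rw [hyp'] at m2
  set p2 : Fin r → R := p + (t ^ 2 * s) • x1 + (t ^ 2 * s) • x2 with hp2
  have hp2v : ∀ i, i ≠ l → p2 i = v (ixP r i) := by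
    intro i hi
    rw [hd]
    by_cases h : i = g
    · rw [h]
      simp [hp2, hx1, hx2, hgl, hp, he, ht]
      ring
    · simp [hp2, hx1, hx2, hi, h, hp, he, ht]
      ring
  obtain ⟨ω, hω⟩ : ∃ ω, v (ixP r l) = p2 l + t * (ω * s) := by
    refine ⟨t * (s * e l + (1 - β) * (a g * e g) + (1 - β) * ∑ j ∈ Finset.univ.erase g, a j * e j), ?_⟩
    rw [hd]
    simp [hp2, hx1, hx2, hgl.symm, hp, he, ht]
    ring
  have m3 := Mv.row t l (Finset.univ.erase l) (by simp) (fun i => ω * a' i) p2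
  have e3 : p2 + Pi.single l (t * ∑ j ∈ Finset.univ.erase l, (fun i => ω * a' i) j * p2 j)
      = fun i => v (ixP r i) := by
    have : ∑ j ∈ Finset.univ.erase l, (fun i => ω * a' i) j * p2 j = ω * s := by
      conv_rhs => rw [hs', hsum _ (fun i => a' i * p2 i) (fun i hi => by rw [hp2v i hi])
        (by simp [ha']), Finset.mul_sum]
      exact Finset.sum_congr rfl fun i _ => by ring
    rw [this]
    ext i
    by_cases h : i = l
    · rw [h, hω]; simp
    · simp [h, hp2v i h]
  rw [e3] at m3
  have M := (m1.trans m2).trans m3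
  obtain ⟨L, hLl, hL, hLP, hLQ, hLN⟩ := lift_moves r t _ _ _ M u (fun i => rfl)
  set w := L.prod.mulVec u with hw
  have hε : ∀ i, ∃ c, v (ixN r i) - w (ixN r i) = t * c := by
    intro i
    have h1 : t ∣ v (ixN r i) - u (ixN r i) := by
      rw [hd]
      refine ⟨s ^ (K + 3) * d (ixN r i), ?_⟩
      rw [ht]; ring
    have := dvd_sub h1 (hLN i)
    obtain ⟨c, hc⟩ := this
    exact ⟨c, by rw [← hc]; ring⟩
  choose ε hε using hε
  have hzero : s ^ K * ∑ i, v (ixP r i) * ε i = 0 := by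
    apply hK
    rw [Finset.mul_sum]
    have : ∑ i, t * (v (ixP r i) * ε i) = quadE r v - quadE r w := by
      rw [quadE_eq, quadE_eq, ← Finset.sum_sub_distrib]
      refine Finset.sum_congr rfl fun i _ => ?_
      rw [hLP i]
      linear_combination - v (ixP r i) * hε i
    rw [this, hLQ, hu, hv, sub_zero]
  set α : Fin r → Fin r → R := fun i j => s ^ K * (ε i * a' j - a' i * ε j) with hα
  obtain ⟨L', hLl', hL', hLP', hLN'⟩ := alt_moves r
    ((Finset.univ : Finset (Fin r × Fin r)).filter (fun x => x.1 < x.2))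
    (fun x hx => ne_of_lt (Finset.mem_filter.1 hx).2) α w
  rw [card_pairs] at hLl'
  refine ⟨(L' ++ L).prod, ⟨L' ++ L, ?_, ?_, rfl⟩, ?_⟩
  · rw [List.length_append, hLl, hLl', Finset.card_pair hgl,
      Finset.card_erase_of_mem (Finset.mem_univ _), Finset.card_erase_of_mem (Finset.mem_univ _),
      Finset.card_univ, Fintype.card_fin]
    omega
  · intro m hm
    rcases List.mem_append.1 hm with h | h
    · exact hL' m h
    · exact hL m h
  · rw [List.prod_append, ← Matrix.mulVec_mulVec, ← hw]
    ext k
    rcases ix_cases r k with ⟨i, rfl⟩ | ⟨i, rfl⟩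
    · rw [hLP', hLP]
    · rw [hLN', alt_sum r α (fun i j => by simp only [hα]; ring)
        (fun i => by simp only [hα]; ring) (fun i => w (ixP r i)) i]
      have : ∑ j, α i j * w (ixP r j) = s ^ K * ε i * (∑ j, a' j * v (ixP r j))
          - a' i * (s ^ K * ∑ j, v (ixP r j) * ε j) := by
        simp only [Finset.mul_sum, ← Finset.sum_sub_distrib]
        refine Finset.sum_congr rfl fun j _ => ?_
        rw [hLP j]
        simp only [hα]; ring
      rw [this, hzero, ← hs']
      have := hε i
      rw [ht] at this
      linear_combination -this

theorem span_coeffs (r : ℕ) (hr : 3 ≤ r) (b : Fin (2 * r) → R) (x : R)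
    (hx : x ∈ Ideal.span {x : R | ∃ i : Fin (2 * r), i.val < r - 1 ∧ x = b i}) :
    ∃ a : Fin r → R, a ⟨r - 1, by omega⟩ = 0 ∧ x = ∑ i, a i * b (ixP r i) := by
  induction hx using Submodule.span_induction with
  | mem x h =>
    obtain ⟨i, hi, rfl⟩ := h
    refine ⟨Pi.single ⟨i.val, by omega⟩ 1, ?_, ?_⟩
    · rw [Pi.single_eq_of_ne]
      simp only [ne_eq, Fin.mk.injEq]; omega
    · simp [Pi.single_apply, ixP]
  | zero => exact ⟨0, rfl, by simp⟩
  | add x y _ _ h1 h2 =>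
    obtain ⟨a, ha, rfl⟩ := h1
    obtain ⟨a', ha', rfl⟩ := h2
    exact ⟨a + a', by simp [ha, ha'], by simp [add_mul, Finset.sum_add_distrib]⟩
  | smul c x _ h =>
    obtain ⟨a, ha, rfl⟩ := h
    exact ⟨c • a, by simp [ha], by simp [Finset.mul_sum, mul_assoc]⟩

theorem ann_stab [IsNoetherianRing R] (s : R) :
    ∃ K : ℕ, ∀ f : R, s ^ (K + 1) * f = 0 → s ^ K * f = 0 := by
  let F : ℕ →o Ideal R :=
    ⟨fun n => LinearMap.ker (LinearMap.mulLeft R (s ^ n)), by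
      refine monotone_nat_of_le_succ fun n f hf => ?_
      simp only [LinearMap.mem_ker, LinearMap.mulLeft_apply] at hf ⊢
      rw [pow_succ', mul_assoc, hf, mul_zero]⟩
  obtain ⟨K, hK⟩ := monotone_stabilizes_iff_noetherian.2 ‹IsNoetherianRing R› F
  refine ⟨K, fun f hf => ?_⟩
  have h1 : f ∈ F (K + 1) := by simpa [F] using hf
  rw [← hK (K + 1) (Nat.le_succ K)] at h1
  simpa [F] using h1

end Helpers

/-- Shifting the variable: for `b = b(y) ∈ IUm_{2r}(B[y])` and
`s ∈ B ∩ ⟨b_1,…,b_{r−1}⟩`, there is `m ∈ ℕ` such that, in `B[y][z]`,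
the column `b(y + sᵐz)` lies in `EO(2r, B[y][z])^{≤ r(r−1)/2 + 8r−4} · b(y)`.
Here the outer polynomial variable is `z`, and `y ↦ y + sᵐz` is the `B`-algebra
map `B[y] → B[y][z]` sending `y` to `C y + C (C sᵐ) * z`. -/
theorem even_shift_variable
    (B : Type*) [CommRing B] [IsNoetherianRing B] (r : ℕ) (hr : 3 ≤ r)
    (b : Fin (2 * r) → Polynomial B) (hb : b ∈ IUmE r (Polynomial B))
    (s : B)
    (hs : Polynomial.C s ∈ Ideal.span {x : Polynomial B | ∃ i : Fin (2 * r), i.val < r - 1 ∧ x = b i}) :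
    ∃ m : ℕ, ∃ E ∈ EOE r (r * (r - 1) / 2 + 8 * r - 4) (Polynomial (Polynomial B)),
      E.mulVec (fun i => Polynomial.C (b i)) = fun i =>
        Polynomial.aeval (R := B)
          (Polynomial.C Polynomial.X + Polynomial.C (Polynomial.C (s ^ m)) * Polynomial.X)
          (b i) := by
  obtain ⟨K, hK⟩ := ann_stab (Polynomial.C (Polynomial.C s) : Polynomial (Polynomial B))
  obtain ⟨a, ha, has⟩ := span_coeffs r hr b _ hs
  refine ⟨2 * (K + 1) + 2, ?_⟩
  set w : Polynomial (Polynomial B) := Polynomial.C Polynomial.X +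
    Polynomial.C (Polynomial.C (s ^ (2 * (K + 1) + 2))) * Polynomial.X with hw
  have hd : ∀ i, ∃ d, Polynomial.aeval (R := B) w (b i) = Polynomial.C (b i) +
      (Polynomial.C (Polynomial.C s)) ^ (2 * (K + 1) + 2) * d := by
    intro i
    have h1 : w - Polynomial.C Polynomial.X ∣
        Polynomial.aeval (R := B) w (b i)
          - Polynomial.aeval (R := B) (Polynomial.C Polynomial.X) (b i) := by
      have := Polynomial.sub_dvd_eval_sub w (Polynomial.C Polynomial.X)
        ((b i).map (algebraMap B (Polynomial (Polynomial B))))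
      simpa only [Polynomial.eval_map_algebraMap] using this
    have h2 : Polynomial.aeval (R := B) (Polynomial.C Polynomial.X : Polynomial (Polynomial B)) (b i)
        = Polynomial.C (b i) := by
      have := Polynomial.aeval_algebraMap_apply (R := B) (Polynomial (Polynomial B)) (Polynomial.X : Polynomial B) (b i)
      simpa [Polynomial.algebraMap_eq] using this
    obtain ⟨d, hd⟩ := h1
    refine ⟨Polynomial.X * d, ?_⟩
    rw [h2] at hd
    have h3 : w - Polynomial.C Polynomial.X =
      (Polynomial.C (Polynomial.C s)) ^ (2 * (K + 1) + 2) * Polynomial.X := by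
      rw [hw]; simp
    rw [h3] at hd
    linear_combination hd
  choose d hd using hd
  have hq : ∀ f : Polynomial B →+* Polynomial (Polynomial B),
      quadE r (fun i => f (b i)) = 0 := by
    intro f
    have := congrArg f hb.2
    simpa [quadE, map_sum] using this
  refine core_shift r hr (Polynomial.C (Polynomial.C s)) K hK _ _ d
    (hq Polynomial.C) (hq (Polynomial.aeval (R := B) w).toRingHom) hd
    (fun i => Polynomial.C (a i)) (fun i => Polynomial.aeval (R := B) w (a i)) ?_ ?_ ?_ ?_
  · simp [ha]
  · simp [ha]
  · have := congrArg (Polynomial.C : Polynomial B →+* _) has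
    simpa only [map_sum, map_mul] using this
  · have := congrArg (Polynomial.aeval (R := B) w) has
    simp only [map_sum, map_mul, Polynomial.aeval_C] at this
    exact this
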